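/- Let G be a finite group and let H₁,…,H_r and H'₁,…,H'_s be subgroups of G such that the complex permutation representations ⊕ᵢ ℂ[G/Hᵢ] and ⊕ⱼ ℂ[G/H'ⱼ] are isomorphic as representations of G. Let ρ be a finite-dimensional complex representation of G and let ⟨,⟩₁ and ⟨,⟩₂ be two G-invariant positive-definite Hermitian inner products on ρ. For each subgroup H among the Hᵢ and H'ⱼ fix a basis of ρ^{H}. Then, computing Gram determinants with respect to these fixed bases, ∏ᵢ det((1/|Hᵢ|)⟨,⟩₁ | ρ^{Hᵢ}) / ∏ⱼ det((1/|H'ⱼ|)⟨,⟩₁ | ρ^{H'ⱼ}) = ∏ᵢ det((1/|Hᵢ|)⟨,⟩₂ | ρ^{Hᵢ}) / ∏ⱼ det((1/|H'ⱼ|)⟨,⟩₂ | ρ^{H'ⱼ}). -/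

import Mathlib

/-- The submodule of vectors fixed by every element of a subgroup `H` under a
representation `ρ`. -/
def fixedSubmodule {k G V : Type} [CommRing k] [Group G] [AddCommGroup V] [Module k V]
    (ρ : Representation k G V) (H : Subgroup G) : Submodule k V where
  carrier := {v | ∀ h ∈ H, ρ h v = v}
  add_mem' := by
    intro a b ha hb h hh
    rw [map_add, ha h hh, hb h hh]
  zero_mem' := by
    intro h hh
    rw [map_zero]
  smul_mem' := by
    intro c v hv h hh
    rw [map_smul, hv h hh]

/-- The determinant of a block diagonal matrix with blocks of possibly different sizes. -/
theorem Matrix.det_blockDiagonal' {R ι : Type*} [CommRing R] [Fintype ι] [DecidableEq ι]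
    {κ : ι → Type*} [∀ i, Fintype (κ i)] [∀ i, DecidableEq (κ i)]
    (M : ∀ i, Matrix (κ i) (κ i) R) :
    (Matrix.blockDiagonal' M).det = ∏ i, (M i).det := by
  classical
  let _ : LinearOrder ι := linearOrderOfSTO WellOrderingRel
  rw [(Matrix.blockTriangular_blockDiagonal' M).det_fintype]
  refine Finset.prod_congr rfl fun i _ => ?_
  rw [← Matrix.det_submatrix_equiv_self (Equiv.sigmaSubtype i).symm]
  congr 1
  ext k l
  exact Matrix.blockDiagonal'_apply_eq M i k l

/-- The determinant of a product of endomorphisms of possibly different modules. -/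
theorem LinearMap.det_piMap_of_basis {R ι : Type*} [CommRing R] [Fintype ι]
    {M : ι → Type*} [∀ i, AddCommGroup (M i)] [∀ i, Module R (M i)]
    {κ : ι → Type*} [∀ i, Fintype (κ i)] [∀ i, DecidableEq (κ i)]
    (b : ∀ i, Module.Basis (κ i) R (M i)) (f : ∀ i, M i →ₗ[R] M i) :
    LinearMap.det (LinearMap.pi fun i => f i ∘ₗ LinearMap.proj i) =
      ∏ i, LinearMap.det (f i) := by
  classical
  rw [← LinearMap.det_toMatrix (Pi.basis b)]
  have h : LinearMap.toMatrix (Pi.basis b) (Pi.basis b)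
      (LinearMap.pi fun i => f i ∘ₗ LinearMap.proj i) =
      Matrix.blockDiagonal' fun i => LinearMap.toMatrix (b i) (b i) (f i) := by
    ext ⟨i, k⟩ ⟨j, l⟩
    rw [LinearMap.toMatrix_apply, Pi.basis_apply, Pi.basis_repr]
    by_cases hij : i = j
    · subst hij
      simp [LinearMap.toMatrix_apply]
    · simp [Matrix.blockDiagonal'_apply, hij]
  rw [h, Matrix.det_blockDiagonal']
  simp only [LinearMap.det_toMatrix]

/-- A sesquilinear form on a finite-dimensional space is represented by an endomorphism
relative to any form that is nondegenerate on the right. -/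
theorem exists_endomorphism_of_sesquilinear {V : Type*} [AddCommGroup V] [Module ℂ V]
    [FiniteDimensional ℂ V] (B₁ B₂ : V →ₗ⋆[ℂ] V →ₗ[ℂ] ℂ)
    (h : ∀ w, (∀ v, B₁ v w = 0) → w = 0) :
    ∃ T : V →ₗ[ℂ] V, ∀ v w, B₁ v (T w) = B₂ v w := by
  let b := Module.finBasis ℂ V
  let φ (B : V →ₗ⋆[ℂ] V →ₗ[ℂ] ℂ) : V →ₗ[ℂ] (Fin (Module.finrank ℂ V) → ℂ) :=
    LinearMap.pi fun i => B (b i)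
  have ext_basis : ∀ f g : V →ₗ⋆[ℂ] ℂ, (∀ i, f (b i) = g (b i)) → f = g :=
    fun f g hfg => b.ext hfg
  have hφ : Function.Injective (φ B₁) := by
    rw [injective_iff_map_eq_zero]
    intro w hw
    refine h w fun v => ?_
    have := ext_basis (B₁.flip w) 0 fun i => congrFun hw i
    exact LinearMap.congr_fun this v
  let E := LinearMap.linearEquivOfInjective (φ B₁) hφ (by simp)
  refine ⟨E.symm.toLinearMap ∘ₗ φ B₂, fun v w => ?_⟩
  have hE : φ B₁ (E.symm (φ B₂ w)) = φ B₂ w := E.apply_symm_apply (φ B₂ w)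
  exact LinearMap.congr_fun
    (ext_basis (B₁.flip (E.symm (φ B₂ w))) (B₂.flip w) fun i => congrFun hE i) v

/-- The linear maps `ℂ[X] → V` that intertwine the permutation action and `ρ`. -/
def equivariantMaps {G V : Type} [Group G] [AddCommGroup V] [Module ℂ V]
    (ρ : Representation ℂ G V) (X : Type) [MulAction G X] :
    Submodule ℂ ((X →₀ ℂ) →ₗ[ℂ] V) where
  carrier := {L | ∀ (g : G) (v : X →₀ ℂ), L (v.mapDomain (g • ·)) = ρ g (L v)}
  add_mem' ha hb g v := by simp [ha g v, hb g v]
  zero_mem' g v := by simp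
  smul_mem' c L hL g v := by simp [hL g v]

section

variable {G V : Type} [Group G] [AddCommGroup V] [Module ℂ V] (ρ : Representation ℂ G V)

/-- Evaluation of equivariant maps at the base points of the orbits `G ⧸ H i`. -/
noncomputable def evalBasePoints {ι : Type} (H : ι → Subgroup G) :
    equivariantMaps ρ (Σ i, G ⧸ H i) →ₗ[ℂ] ∀ i, fixedSubmodule ρ (H i) where
  toFun L i := ⟨L.1 (Finsupp.single ⟨i, ((1 : G) : G ⧸ H i)⟩ 1), fun h hh => by
    rw [← L.2 h, Finsupp.mapDomain_single]
    congr 2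
    refine Sigma.ext rfl (heq_of_eq ?_)
    change ((h * 1 : G) : G ⧸ H i) = _
    rw [QuotientGroup.eq]
    simpa using hh⟩
  map_add' _ _ := rfl
  map_smul' _ _ := rfl

theorem evalBasePoints_bijective {ι : Type} (H : ι → Subgroup G) :
    Function.Bijective (evalBasePoints ρ H) := by
  have smul_base : ∀ (i : ι) (g : G),
      g • (⟨i, ((1 : G) : G ⧸ H i)⟩ : Σ i, G ⧸ H i) = ⟨i, (g : G ⧸ H i)⟩ := by
    intro i g
    refine Sigma.ext rfl (heq_of_eq ?_)
    change ((g * 1 : G) : G ⧸ H i) = _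
    rw [mul_one]
  constructor
  · intro L L' h
    refine Subtype.ext (Finsupp.lhom_ext' fun ⟨i, x⟩ => LinearMap.ext_ring ?_)
    obtain ⟨g, rfl⟩ := QuotientGroup.mk_surjective x
    have hi : L.1 (Finsupp.single ⟨i, ((1 : G) : G ⧸ H i)⟩ 1) =
        L'.1 (Finsupp.single ⟨i, ((1 : G) : G ⧸ H i)⟩ 1) :=
      congrArg Subtype.val (congrFun h i)
    have h₁ := L.2 g (Finsupp.single ⟨i, ((1 : G) : G ⧸ H i)⟩ 1)
    have h₂ := L'.2 g (Finsupp.single ⟨i, ((1 : G) : G ⧸ H i)⟩ 1)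
    rw [Finsupp.mapDomain_single, smul_base] at h₁ h₂
    simp only [LinearMap.comp_apply, Finsupp.lsingle_apply]
    rw [h₁, h₂, hi]
  · intro v
    let f : (Σ i, G ⧸ H i) → V := fun x => Quotient.liftOn' x.2 (fun g => ρ g (v x.1 : V)) (by
      intro a c hac
      have hfix := (v x.1).2 _ (QuotientGroup.leftRel_apply.mp hac)
      change ρ a _ = ρ c _
      conv_lhs => rw [← hfix]
      rw [← Module.End.mul_apply, ← map_mul, mul_inv_cancel_left])
    have hf : ∀ (g : G) x, f (g • x) = ρ g (f x) := by
      rintro g ⟨i, x⟩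
      obtain ⟨a, rfl⟩ := QuotientGroup.mk_surjective x
      change ρ (g * a) (v i : V) = ρ g (ρ a (v i : V))
      rw [map_mul, Module.End.mul_apply]
    refine ⟨⟨Finsupp.linearCombination ℂ f, fun g w => ?_⟩, ?_⟩
    · induction w using Finsupp.induction_linear with
      | zero => simp
      | add w w' hw hw' => simp only [Finsupp.mapDomain_add, map_add, hw, hw']
      | single x c => simp [Finsupp.mapDomain_single, hf]
    · funext i
      refine Subtype.ext ?_
      change Finsupp.linearCombination ℂ f (Finsupp.single ⟨i, ((1 : G) : G ⧸ H i)⟩ 1) = _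
      rw [Finsupp.linearCombination_single, one_smul]
      change ρ 1 (v i : V) = _
      simp

/-- An equivariant isomorphism of permutation modules induces an isomorphism of the spaces
of equivariant maps. -/
noncomputable def equivariantMapsCongr {X Y : Type} [MulAction G X] [MulAction G Y]
    (e : (X →₀ ℂ) ≃ₗ[ℂ] (Y →₀ ℂ))
    (he : ∀ (g : G) v, e (v.mapDomain (g • ·)) = (e v).mapDomain (g • ·)) :
    equivariantMaps ρ X ≃ₗ[ℂ] equivariantMaps ρ Y where
  toFun L := ⟨L.1 ∘ₗ e.symm.toLinearMap, fun g v => by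
    have h : e.symm (v.mapDomain (g • ·)) = (e.symm v).mapDomain (g • ·) := by
      rw [e.symm_apply_eq, he, e.apply_symm_apply]
    simp only [LinearMap.comp_apply, LinearEquiv.coe_coe, h, L.2 g]⟩
  invFun L := ⟨L.1 ∘ₗ e.toLinearMap, fun g v => by
    simp only [LinearMap.comp_apply, LinearEquiv.coe_coe, he, L.2 g]⟩
  map_add' _ _ := rfl
  map_smul' _ _ := rfl
  left_inv L := Subtype.ext (LinearMap.ext fun v => by simp)
  right_inv L := Subtype.ext (LinearMap.ext fun v => by simp)

variable {ρ} {T : V →ₗ[ℂ] V}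

theorem map_mem_fixedSubmodule (hT : ∀ g v, T (ρ g v) = ρ g (T v)) (H : Subgroup G) :
    ∀ v ∈ fixedSubmodule ρ H, T v ∈ fixedSubmodule ρ H := fun v hv h hh => by
  rw [← hT, hv h hh]

/-- Postcomposition of equivariant maps with an equivariant endomorphism. -/
noncomputable def equivariantMapsPostcomp (hT : ∀ g v, T (ρ g v) = ρ g (T v))
    (X : Type) [MulAction G X] :
    equivariantMaps ρ X →ₗ[ℂ] equivariantMaps ρ X where
  toFun L := ⟨T ∘ₗ L.1, fun g v => by simp only [LinearMap.comp_apply, L.2 g, hT]⟩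
  map_add' L L' := Subtype.ext (LinearMap.comp_add _ _ _)
  map_smul' c L := Subtype.ext (LinearMap.comp_smul _ _ _)

/-- The product of the determinants of an equivariant endomorphism on the fixed subspaces is
its determinant on the equivariant maps out of the permutation module. -/
theorem prod_det_restrict_eq_det_postcomp [FiniteDimensional ℂ V]
    (hT : ∀ g v, T (ρ g v) = ρ g (T v)) {ι : Type} [Fintype ι]
    (H : ι → Subgroup G) :
    ∏ i, LinearMap.det (T.restrict (map_mem_fixedSubmodule hT (H i))) =
      LinearMap.det (equivariantMapsPostcomp hT (Σ i, G ⧸ H i)) := by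
  let E := LinearEquiv.ofBijective _ (evalBasePoints_bijective ρ H)
  rw [← LinearMap.det_piMap_of_basis (fun i => Module.finBasis ℂ (fixedSubmodule ρ (H i))),
    ← LinearMap.det_conj (equivariantMapsPostcomp hT (Σ i, G ⧸ H i)) E]
  congr 1
  refine LinearMap.ext fun v => ?_
  obtain ⟨L, rfl⟩ := E.surjective v
  simp only [LinearMap.comp_apply, LinearEquiv.coe_coe, LinearEquiv.symm_apply_apply]
  rfl

/-- Isomorphic permutation modules give the same product of determinants on fixed subspaces. -/
theorem prod_det_restrict_congr [FiniteDimensional ℂ V]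
    (hT : ∀ g v, T (ρ g v) = ρ g (T v)) {ι κ : Type} [Fintype ι] [Fintype κ]
    (H : ι → Subgroup G) (H' : κ → Subgroup G)
    (e : ((Σ i, G ⧸ H i) →₀ ℂ) ≃ₗ[ℂ] ((Σ j, G ⧸ H' j) →₀ ℂ))
    (he : ∀ (g : G) v, e (v.mapDomain (g • ·)) = (e v).mapDomain (g • ·)) :
    ∏ i, LinearMap.det (T.restrict (map_mem_fixedSubmodule hT (H i))) =
      ∏ j, LinearMap.det (T.restrict (map_mem_fixedSubmodule hT (H' j))) := by
  rw [prod_det_restrict_eq_det_postcomp hT, prod_det_restrict_eq_det_postcomp hT,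
    ← LinearMap.det_conj _ (equivariantMapsCongr ρ e he)]
  congr 1
  refine LinearMap.ext fun L => Subtype.ext (LinearMap.ext fun v => ?_)
  change T (L.1 (e (e.symm v))) = T (L.1 v)
  rw [e.apply_symm_apply]

end

/-- Gram matrices of forms related by an endomorphism `T` differ by the determinant of `T`. -/
theorem det_gram_eq_mul_det_restrict {V : Type*} [AddCommGroup V] [Module ℂ V]
    {B₁ B₂ : V →ₗ⋆[ℂ] V →ₗ[ℂ] ℂ} {T : V →ₗ[ℂ] V} (hB : ∀ v w, B₁ v (T w) = B₂ v w)
    {W : Submodule ℂ V} (hW : ∀ v ∈ W, T v ∈ W) {n : Type*} [Fintype n] [DecidableEq n]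
    (b : Module.Basis n ℂ W) (m : ℂ) :
    (Matrix.of fun a c : n => m * B₂ (b a : V) (b c : V)).det =
      (Matrix.of fun a c : n => m * B₁ (b a : V) (b c : V)).det *
        LinearMap.det (T.restrict hW) := by
  rw [← LinearMap.det_toMatrix b, ← Matrix.det_mul]
  congr 1
  ext a c
  have h : T (b c : V) = ∑ k, LinearMap.toMatrix b b (T.restrict hW) k c • (b k : V) := by
    have := congrArg W.subtype (b.sum_repr (T.restrict hW (b c)))
    rw [map_sum] at this
    simp only [LinearMap.toMatrix_apply]
    exact this.symm
  simp only [Matrix.of_apply, Matrix.mul_apply]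
  rw [← hB, h, map_sum, Finset.mul_sum]
  refine Finset.sum_congr rfl fun k _ => ?_
  rw [map_smul, smul_eq_mul]
  ring

/-- Given a relation `⊕ᵢ ℂ[G/Hᵢ] ≅ ⊕ⱼ ℂ[G/H'ⱼ]` of complex permutation representations of a
finite group `G`, a complex representation `ρ` with two `G`-invariant positive-definite
Hermitian inner products `B₁`, `B₂`, and fixed bases of the fixed subspaces `ρ^{H}`, the
quotient `∏ᵢ det((1/|Hᵢ|)B|ρ^{Hᵢ}) / ∏ⱼ det((1/|H'ⱼ|)B|ρ^{H'ⱼ})` of Gram determinants is the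
same for `B = B₁` and `B = B₂`. -/
theorem gram_det_quotient_indep_of_innerProduct
    {G : Type} [Group G] [Fintype G]
    {r s : ℕ} (H : Fin r → Subgroup G) (H' : Fin s → Subgroup G)
    (e : ((Σ i : Fin r, G ⧸ H i) →₀ ℂ) ≃ₗ[ℂ] ((Σ j : Fin s, G ⧸ H' j) →₀ ℂ))
    (he : ∀ (g : G) (v : (Σ i : Fin r, G ⧸ H i) →₀ ℂ),
      e (Representation.ofMulAction ℂ G (Σ i : Fin r, G ⧸ H i) g (MonoidAlgebra.ofCoeff v)).coeff =
        (Representation.ofMulAction ℂ G (Σ j : Fin s, G ⧸ H' j) g (MonoidAlgebra.ofCoeff (e v))).coeff)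
    {V : Type} [AddCommGroup V] [Module ℂ V] [FiniteDimensional ℂ V]
    (ρ : Representation ℂ G V)
    (B₁ B₂ : V →ₗ⋆[ℂ] V →ₗ[ℂ] ℂ)
    (hB₁inv : ∀ (g : G) (v w : V), B₁ (ρ g v) (ρ g w) = B₁ v w)
    (hB₁herm : ∀ v w : V, B₁ v w = starRingEnd ℂ (B₁ w v))
    (hB₁pos : ∀ v : V, v ≠ 0 → 0 < (B₁ v v).re)
    (hB₂inv : ∀ (g : G) (v w : V), B₂ (ρ g v) (ρ g w) = B₂ v w)
    (hB₂herm : ∀ v w : V, B₂ v w = starRingEnd ℂ (B₂ w v))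
    (hB₂pos : ∀ v : V, v ≠ 0 → 0 < (B₂ v v).re)
    (d : Fin r → ℕ) (d' : Fin s → ℕ)
    (b : ∀ i, Module.Basis (Fin (d i)) ℂ (fixedSubmodule ρ (H i)))
    (b' : ∀ j, Module.Basis (Fin (d' j)) ℂ (fixedSubmodule ρ (H' j))) :
    (∏ i, (Matrix.of fun a c : Fin (d i) =>
        ((Nat.card (H i) : ℂ))⁻¹ * B₁ (b i a : V) (b i c : V)).det) /
      (∏ j, (Matrix.of fun a c : Fin (d' j) =>
        ((Nat.card (H' j) : ℂ))⁻¹ * B₁ (b' j a : V) (b' j c : V)).det) =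
    (∏ i, (Matrix.of fun a c : Fin (d i) =>
        ((Nat.card (H i) : ℂ))⁻¹ * B₂ (b i a : V) (b i c : V)).det) /
      (∏ j, (Matrix.of fun a c : Fin (d' j) =>
        ((Nat.card (H' j) : ℂ))⁻¹ * B₂ (b' j a : V) (b' j c : V)).det) := by
  have hpos : ∀ {B : V →ₗ⋆[ℂ] V →ₗ[ℂ] ℂ}, (∀ v : V, v ≠ 0 → 0 < (B v v).re) →
      ∀ w, (∀ v, B v w = 0) → w = 0 := by
    intro B hB w hw
    by_contra hne
    have := hB w hne
    simp [hw w] at this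
  obtain ⟨T, hBT⟩ := exists_endomorphism_of_sesquilinear B₁ B₂ (hpos hB₁pos)
  have hT : ∀ g v, T (ρ g v) = ρ g (T v) := by
    intro g w
    rw [← sub_eq_zero]
    refine hpos hB₁pos _ fun v => ?_
    have hv : v = ρ g (ρ g⁻¹ v) := by simp
    rw [map_sub, sub_eq_zero, hBT, hv, hB₂inv, hB₁inv, hBT]
  have hTinj : Function.Injective T := by
    rw [injective_iff_map_eq_zero]
    intro w hw
    exact hpos hB₂pos w fun v => by rw [← hBT, hw, map_zero]
  have hdet : ∀ K : Subgroup G,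
      LinearMap.det (T.restrict (map_mem_fixedSubmodule hT K)) ≠ 0 := by
    intro K h0
    refine LinearMap.det_eq_zero_iff_ker_ne_bot.mp h0 (LinearMap.ker_eq_bot.mpr ?_)
    exact fun x y hxy => Subtype.ext (hTinj (congrArg Subtype.val hxy))
  have hprod := prod_det_restrict_congr hT H H' e he
  simp only [det_gram_eq_mul_det_restrict hBT (map_mem_fixedSubmodule hT _),
    Finset.prod_mul_distrib]
  rw [hprod, mul_div_mul_right _ _ (Finset.prod_ne_zero_iff.mpr fun j _ => hdet (H' j))]
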